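/- arXiv:1212.6825 — 5 statements merged into one kernel-verified Lean document; each statement's English description precedes it below -/
import Mathlib

section
/- Let q = p^a be a power of an odd prime p, let d be a prime number with d dividing p−1, let ω be an element of order d in (ℤ/qℤ)^×, let A = ⟨ω⟩, and let X = A·1. Then for every y ∈ ℤ/qℤ there exist complex numbers z_1, …, z_{d−1}, each of modulus 1, such that σ_X(y) = z_1 + z_2 + ⋯ + z_{d−1} + (z_1 z_2 ⋯ z_{d−1})^{−1}. (This set is the filled hypocycloid bounded by the d-cusped curve θ ↦ (d−1)e^{iθ} + e^{i(d−1)θ}.) -/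
open Complex

/-- `e(θ) = exp(2πiθ)`. -/
noncomputable def e2 (θ : ℝ) : ℂ := Complex.exp (2 * Real.pi * Complex.I * θ)

/-- The cyclic supercharacter attached to a subset `X` of `ℤ/nℤ`:
`σ_X(y) = Σ_{x ∈ X} e(xy/n)`. -/
noncomputable def superchar (n : ℕ) (X : Set (ZMod n)) (y : ZMod n) : ℂ :=
  ∑ᶠ x ∈ X, e2 (((x.val * y.val : ℕ) : ℝ) / (n : ℝ))

/-- The orbit `Ar = {ar : a ∈ A}` of `r` under a unit subgroup `A`. -/
def unitOrbit (n : ℕ) (A : Subgroup (ZMod n)ˣ) (r : ZMod n) : Set (ZMod n) :=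
  (fun a : (ZMod n)ˣ => (a : ZMod n) * r) '' (A : Set (ZMod n)ˣ)

theorem e2_eq (n : ℕ) [NeZero n] (x y : ZMod n) :
    e2 (((x.val * y.val : ℕ) : ℝ) / (n : ℝ)) = ZMod.stdAddChar (x * y) := by
  have h : x * y = (((x.val * y.val : ℕ) : ℤ) : ZMod n) := by
    push_cast
    simp
  rw [h, ZMod.stdAddChar_coe]
  unfold e2
  congr 1
  push_cast
  ring

theorem geom_zero (p a d : ℕ) (hp : p.Prime) (hd : d.Prime) (hdvd : d ∣ p - 1)
    (ω : (ZMod (p ^ a))ˣ) (hω : orderOf ω = d) :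
    ∑ i ∈ Finset.range d, (ω : ZMod (p ^ a)) ^ i = 0 := by
  haveI : NeZero (p ^ a) := ⟨pow_ne_zero _ hp.ne_zero⟩
  have h1 : (ω : ZMod (p ^ a)) ^ d = 1 := by
    rw [← hω, ← Units.val_pow_eq_pow_val, pow_orderOf_eq_one, Units.val_one]
  have hg : (∑ i ∈ Finset.range d, (ω : ZMod (p ^ a)) ^ i) * ((ω : ZMod (p ^ a)) - 1) = 0 := by
    rw [geom_sum_mul, h1, sub_self]
  by_cases hu : IsUnit ((ω : ZMod (p ^ a)) - 1)
  · exact hu.mul_left_eq_zero.mp hg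
  exfalso
  have hnil : IsNilpotent ((ω : ZMod (p ^ a)) - 1) := by
    set x := (ω : ZMod (p ^ a)) - 1 with hx
    have hxv : ((x.val : ℕ) : ZMod (p ^ a)) = x := ZMod.natCast_zmod_val x
    have hpd : p ∣ x.val := by
      by_contra hc
      apply hu
      rw [← hxv, ZMod.isUnit_iff_coprime]
      exact (((Nat.Prime.coprime_iff_not_dvd hp).2 hc).symm).pow_right a
    refine ⟨a, ?_⟩
    rw [← hxv, ← Nat.cast_pow, ZMod.natCast_eq_zero_iff]
    exact pow_dvd_pow_of_dvd hpd a
  have hdu : IsUnit ((d : ℕ) : ZMod (p ^ a)) := by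
    rw [ZMod.isUnit_iff_coprime]
    refine Nat.Coprime.pow_right a ((Nat.coprime_primes hd hp).2 ?_)
    rintro rfl
    have := Nat.le_of_dvd (by have := hp.two_le; omega) hdvd
    have := hp.two_le
    omega
  have hsum : IsUnit (∑ i ∈ Finset.range d, (ω : ZMod (p ^ a)) ^ i) := by
    have hdv : ((ω : ZMod (p ^ a)) - 1) ∣
        (∑ i ∈ Finset.range d, (ω : ZMod (p ^ a)) ^ i) - (d : ZMod (p ^ a)) := by
      have : (∑ i ∈ Finset.range d, (ω : ZMod (p ^ a)) ^ i) - (d : ZMod (p ^ a))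
          = ∑ i ∈ Finset.range d, ((ω : ZMod (p ^ a)) ^ i - 1) := by simp
      rw [this]
      exact Finset.dvd_sum fun i _ => sub_one_dvd_pow_sub_one _ i
    obtain ⟨c, hc⟩ := hdv
    have hn : IsNilpotent (((ω : ZMod (p ^ a)) - 1) * c) :=
      (Commute.all _ _).isNilpotent_mul_right hnil
    have := hn.isUnit_add_left_of_commute hdu (Commute.all _ _)
    rw [← hc] at this
    simpa using this
  have h0 := hsum.mul_right_eq_zero.mp hg
  have : ω = 1 := Units.ext (by simpa using sub_eq_zero.mp h0)
  rw [this, orderOf_one] at hω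
  exact hd.one_lt.ne hω

theorem char_sum (n : ℕ) [NeZero n] (f : ℕ → ZMod n) (k : ℕ) :
    ∏ i ∈ Finset.range k, (ZMod.stdAddChar (f i) : ℂ)
      = ZMod.stdAddChar (∑ i ∈ Finset.range k, f i) := by
  induction k with
  | zero => simp
  | succ k ih => rw [Finset.prod_range_succ, Finset.sum_range_succ, ih, AddChar.map_add_eq_mul]

theorem superchar_eq (n d : ℕ) [NeZero n] (hd : 0 < d) (ω : (ZMod n)ˣ) (hω : orderOf ω = d)
    (y : ZMod n) :
    superchar n (unitOrbit n (Subgroup.zpowers ω) 1) y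
      = ∑ i ∈ Finset.range d, ZMod.stdAddChar ((ω : ZMod n) ^ i * y) := by
  classical
  have hset : unitOrbit n (Subgroup.zpowers ω) 1
      = ↑((Finset.range d).image fun i => (ω : ZMod n) ^ i) := by
    ext x
    simp only [unitOrbit, mul_one, Set.mem_image, SetLike.mem_coe, Finset.coe_image,
      Finset.coe_range, Set.mem_Iio]
    constructor
    · rintro ⟨u, hu, rfl⟩
      rw [(isOfFinOrder_of_finite ω).mem_zpowers_iff_mem_range_orderOf, hω] at hu
      obtain ⟨i, hi, rfl⟩ := Finset.mem_image.mp hu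
      exact ⟨i, Finset.mem_range.mp hi, by simp⟩
    · rintro ⟨i, _, rfl⟩
      exact ⟨ω ^ i, Subgroup.npow_mem_zpowers ω i, by simp⟩
  unfold superchar
  rw [hset, finsum_mem_coe_finset, Finset.sum_image]
  · exact Finset.sum_congr rfl fun i _ => e2_eq n _ _
  · intro i hi j hj hij
    have : ω ^ i = ω ^ j := Units.ext (by simpa using hij)
    refine pow_injOn_Iio_orderOf ?_ ?_ this
    · simpa [hω] using hi
    · simpa [hω] using hj

theorem stmt0 (p a d : ℕ) (hp : p.Prime) (hodd : Odd p) (ha : 0 < a)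
    (hd : d.Prime) (hdvd : d ∣ p - 1)
    (ω : (ZMod (p ^ a))ˣ) (hω : orderOf ω = d)
    (y : ZMod (p ^ a)) :
    ∃ z : Fin (d - 1) → ℂ, (∀ i, ‖z i‖ = 1) ∧
      superchar (p ^ a) (unitOrbit (p ^ a) (Subgroup.zpowers ω) 1) y
        = (∑ i, z i) + (∏ i, z i)⁻¹ := by
  haveI : NeZero (p ^ a) := ⟨pow_ne_zero _ hp.ne_zero⟩
  have hg := geom_zero p a d hp hd hdvd ω hω
  rw [superchar_eq (p ^ a) d hd.pos ω hω y]
  have hd1 : d = (d - 1) + 1 := by have := hd.pos; omega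
  have hnorm : ∀ x : ZMod (p ^ a), ‖(ZMod.stdAddChar x : ℂ)‖ = 1 := fun x => by
    rw [ZMod.stdAddChar_apply]
    exact Circle.norm_coe _
  refine ⟨fun i => ZMod.stdAddChar ((ω : ZMod (p ^ a)) ^ (i : ℕ) * y), fun i => hnorm _, ?_⟩
  have hprod : ∏ i ∈ Finset.range d, (ZMod.stdAddChar ((ω : ZMod (p ^ a)) ^ i * y) : ℂ) = 1 := by
    rw [char_sum (p ^ a) fun i => (ω : ZMod (p ^ a)) ^ i * y, ← Finset.sum_mul, hg, zero_mul, AddChar.map_zero_eq_one]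
  rw [hd1, Finset.prod_range_succ] at hprod
  rw [Fin.sum_univ_eq_sum_range fun i => (ZMod.stdAddChar ((ω : ZMod (p ^ a)) ^ i * y) : ℂ),
    Fin.prod_univ_eq_prod_range fun i => (ZMod.stdAddChar ((ω : ZMod (p ^ a)) ^ i * y) : ℂ),
    ← eq_inv_of_mul_eq_one_right hprod, ← Finset.sum_range_succ, ← hd1]
end

section
/- Let ω ∈ (ℤ/nℤ)^×, r ∈ ℤ/nℤ, and X = ⟨ω⟩r. Set d = n/gcd(r,n) and k = gcd(w−1, d), where w ∈ {0,1,…,n−1} is the integer representative of ω. Then the image of σ_X in ℂ is invariant under complex conjugation and under rotation by 2π/k about the origin (i.e., under multiplication by e(1/k)); in other words, σ_X has k-fold dihedral symmetry. -/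
open Complex

lemma e2_eq_char (n : ℕ) [NeZero n] (m : ℕ) :
    e2 ((m : ℝ) / (n : ℝ)) = ZMod.stdAddChar (N := n) (m : ZMod n) := by
  have := ZMod.stdAddChar_coe (N := n) (m : ℤ)
  rw [Int.cast_natCast] at this
  rw [this, e2]
  congr 1
  push_cast
  ring

lemma superchar_eq_s5 (n : ℕ) [NeZero n] (X : Set (ZMod n)) (y : ZMod n) :
    superchar n X y = ∑ x ∈ (Set.toFinite X).toFinset, ZMod.stdAddChar (N := n) (x * y) := by
  rw [superchar, finsum_mem_eq_finite_toFinset_sum _ (Set.toFinite X)]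
  refine Finset.sum_congr rfl fun x _ => ?_
  rw [e2_eq_char]
  simp

lemma superchar_neg (n : ℕ) [NeZero n] (X : Set (ZMod n)) (y : ZMod n) :
    superchar n X (-y) = (starRingEnd ℂ) (superchar n X y) := by
  rw [superchar_eq_s5, superchar_eq_s5, map_sum]
  refine Finset.sum_congr rfl fun x _ => ?_
  rw [mul_neg, AddChar.map_neg_eq_conj]

lemma superchar_add (n : ℕ) [NeZero n] (X : Set (ZMod n)) (s t y : ZMod n)
    (h : ∀ x ∈ X, x * s = t) :
    superchar n X (y + s) = ZMod.stdAddChar (N := n) t * superchar n X y := by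
  rw [superchar_eq_s5, superchar_eq_s5, Finset.mul_sum]
  refine Finset.sum_congr rfl fun x hx => ?_
  rw [mul_add, h x (by simpa using hx), AddChar.map_add_eq_mul, mul_comm]

theorem stmt5 (n : ℕ) (hn : 0 < n) (ω : (ZMod n)ˣ) (r : ZMod n)
    (d k : ℕ) (hd : d = n / Nat.gcd r.val n)
    (hk : k = Nat.gcd ((ω : ZMod n).val - 1) d) :
    (starRingEnd ℂ) '' Set.range (superchar n (unitOrbit n (Subgroup.zpowers ω) r))
        = Set.range (superchar n (unitOrbit n (Subgroup.zpowers ω) r))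
    ∧ (fun z : ℂ => e2 (1 / (k : ℝ)) * z) ''
        Set.range (superchar n (unitOrbit n (Subgroup.zpowers ω) r))
        = Set.range (superchar n (unitOrbit n (Subgroup.zpowers ω) r)) := by
  haveI : NeZero n := ⟨hn.ne'⟩
  constructor
  · ext z
    constructor
    · rintro ⟨_, ⟨y, rfl⟩, rfl⟩
      exact ⟨-y, superchar_neg n _ y⟩
    · rintro ⟨y, rfl⟩
      exact ⟨_, ⟨-y, rfl⟩, by rw [← superchar_neg, neg_neg]⟩
  · set g := Nat.gcd r.val n with hg
    have hgn : g * d = n := by rw [hd]; exact Nat.mul_div_cancel' (Nat.gcd_dvd_right _ _)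
    have hd0 : 0 < d := Nat.pos_of_ne_zero (by rintro rfl; omega)
    have hk0 : 0 < k := by rw [hk]; exact Nat.gcd_pos_of_pos_right _ hd0
    obtain ⟨c, hc⟩ : k ∣ d := hk ▸ Nat.gcd_dvd_right _ _
    obtain ⟨b, hb⟩ : k ∣ (ω : ZMod n).val - 1 := hk ▸ Nat.gcd_dvd_left _ _
    have hgr : (g : ZMod n) = r * ((Nat.gcdA r.val n : ℤ) : ZMod n) := by
      have := congrArg (Int.cast : ℤ → ZMod n) (Nat.gcd_eq_gcd_ab r.val n)
      simpa using this
    set s : ZMod n := ((Nat.gcdA r.val n : ℤ) : ZMod n) * c with hs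
    have hrs : r * s = ((g * c : ℕ) : ZMod n) := by
      rw [hs, ← mul_assoc, ← hgr]; push_cast; rfl
    have hω : (ω : ZMod n) * ((g * c : ℕ) : ZMod n) = ((g * c : ℕ) : ZMod n) := by
      rcases Nat.lt_or_ge 1 n with h1 | h1
      · haveI : Fact (1 < n) := ⟨h1⟩
        have hv : (ω : ZMod n).val ≠ 0 := by
          rw [Ne, ZMod.val_eq_zero]; exact ω.ne_zero
        have h2 : (ω : ZMod n) = ((k * b + 1 : ℕ) : ZMod n) := by
          rw [← hb, Nat.sub_add_cancel (Nat.pos_of_ne_zero hv)]; simp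
        have h3 : (k * b + 1) * (g * c) = n * b + g * c := by
          rw [← hgn, hc]; ring
        rw [h2, ← Nat.cast_mul, h3]; simp
      · obtain rfl : n = 1 := by omega
        exact Subsingleton.elim _ _
    have hX : ∀ x ∈ unitOrbit n (Subgroup.zpowers ω) r, x * s = ((g * c : ℕ) : ZMod n) := by
      rintro _ ⟨a, ha, rfl⟩
      have hle : Subgroup.zpowers ω ≤
          MulAction.stabilizer (ZMod n)ˣ ((g * c : ℕ) : ZMod n) := by
        rw [Subgroup.zpowers_le, MulAction.mem_stabilizer_iff]; exact hω
      have h4 := MulAction.mem_stabilizer_iff.1 (hle ha)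
      change (a : ZMod n) * r * s = _
      rw [mul_assoc, hrs]; exact h4
    have he : e2 (1 / (k : ℝ)) = ZMod.stdAddChar (N := n) ((g * c : ℕ) : ZMod n) := by
      rw [← e2_eq_char]
      congr 1
      have hn' : (n : ℝ) = (g * c : ℕ) * k := by rw [← hgn, hc]; push_cast; ring
      have hgc : ((g * c : ℕ) : ℝ) ≠ 0 := by
        intro h; rw [h, zero_mul] at hn'
        exact hn.ne' (by exact_mod_cast hn')
      have hk' : (k : ℝ) ≠ 0 := by exact_mod_cast hk0.ne'
      rw [hn']; field_simp
    have key := fun y => superchar_add n _ s _ y hX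
    rw [← he] at key
    ext z
    constructor
    · rintro ⟨_, ⟨y, rfl⟩, rfl⟩
      exact ⟨y + s, key y⟩
    · rintro ⟨y, rfl⟩
      exact ⟨_, ⟨y - s, rfl⟩, by simp only [← key, sub_add_cancel]⟩
end

section
/- Let ω ∈ (ℤ/nℤ)^×, let d be a positive divisor of n, let ξ ∈ (ℤ/nℤ)^× with r = ξ·(n/d), and let X = ⟨ω⟩r. Set k = gcd(w−1, d), where w ∈ {0,1,…,n−1} is the integer representative of ω. Then for every y ∈ ℤ/nℤ, σ_X(y + d/k) = e(c/k)·σ_X(y), where c is an integer representative of ξ; in particular, the image of σ_X is invariant under rotation by 2πc/k about the origin. -/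
open Complex

lemma e2_add' (a b : ℝ) : e2 (a + b) = e2 a * e2 b := by
  unfold e2
  rw [← Complex.exp_add]
  congr 1
  push_cast
  ring

lemma e2_congr' (n : ℕ) (hn : 0 < n) (a b : ℤ) (h : (a : ZMod n) = (b : ZMod n)) :
    e2 ((a : ℝ) / (n : ℝ)) = e2 ((b : ℝ) / (n : ℝ)) := by
  rw [ZMod.intCast_eq_intCast_iff_dvd_sub] at h
  obtain ⟨m, hm⟩ := h
  have hb : b = a + n * m := by linarith
  have hn0 : (n : ℝ) ≠ 0 := by positivity
  have h1 : ((b : ℝ) / (n : ℝ)) = (a : ℝ) / n + m := by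
    rw [hb]; push_cast; field_simp
  rw [h1, e2_add']
  have h2 : e2 (m : ℝ) = 1 := by
    unfold e2
    rw [Complex.exp_eq_one_iff]
    exact ⟨m, by push_cast; ring⟩
  rw [h2, mul_one]

lemma omega_fix' (n d : ℕ) (hn : 0 < n) (hd : 0 < d) (hdvd : d ∣ n) (ω : (ZMod n)ˣ)
    (k : ℕ) (hk : k = Nat.gcd ((ω : ZMod n).val - 1) d) :
    (ω : ZMod n) * ((n / k : ℕ) : ZMod n) = ((n / k : ℕ) : ZMod n) := by
  haveI : NeZero n := ⟨hn.ne'⟩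
  rcases Nat.lt_or_ge 1 n with h1 | h1
  · haveI : Fact (1 < n) := ⟨h1⟩
    have hv : (ω : ZMod n).val ≠ 0 := by
      rw [Ne, ZMod.val_eq_zero]
      exact ω.ne_zero
    have hkd : k ∣ n := (hk ▸ Nat.gcd_dvd_right _ _ : k ∣ d).trans hdvd
    obtain ⟨q, hq⟩ : k ∣ (ω : ZMod n).val - 1 := hk ▸ Nat.gcd_dvd_left _ _
    have hw : (ω : ZMod n) = ((k * q + 1 : ℕ) : ZMod n) := by
      rw [← hq, Nat.sub_add_cancel (Nat.one_le_iff_ne_zero.mpr hv), ZMod.natCast_zmod_val]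
    rw [hw, ← Nat.cast_mul]
    have : (k * q + 1) * (n / k) = n * q + n / k := by
      have := Nat.mul_div_cancel' hkd
      calc _ = (k * (n / k)) * q + n / k := by ring
        _ = _ := by rw [this]
    rw [this]
    push_cast
    simp
  · have : n = 1 := by omega
    subst this
    exact Subsingleton.elim _ _

theorem stmt6 (n d : ℕ) (hn : 0 < n) (hd : 0 < d) (hdvd : d ∣ n)
    (ω ξ : (ZMod n)ˣ) (r : ZMod n)
    (hr : r = (ξ : ZMod n) * ((n / d : ℕ) : ZMod n))
    (k : ℕ) (hk : k = Nat.gcd ((ω : ZMod n).val - 1) d)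
    (c : ℤ) (hc : (c : ZMod n) = (ξ : ZMod n)) :
    (∀ y : ZMod n,
      superchar n (unitOrbit n (Subgroup.zpowers ω) r) (y + ((d / k : ℕ) : ZMod n))
        = e2 ((c : ℝ) / (k : ℝ)) * superchar n (unitOrbit n (Subgroup.zpowers ω) r) y)
    ∧ (fun z : ℂ => e2 ((c : ℝ) / (k : ℝ)) * z) ''
        Set.range (superchar n (unitOrbit n (Subgroup.zpowers ω) r))
        = Set.range (superchar n (unitOrbit n (Subgroup.zpowers ω) r)) := by
  haveI : NeZero n := ⟨hn.ne'⟩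
  have hfix := omega_fix' n d hn hd hdvd ω k hk
  have hkd : k ∣ d := hk ▸ Nat.gcd_dvd_right _ _
  have hkn : k ∣ n := hkd.trans hdvd
  have hk0 : 0 < k := Nat.pos_of_dvd_of_pos hkd hd
  have hmul : n / d * (d / k) = n / k := by
    obtain ⟨a, rfl⟩ := hkd
    obtain ⟨b, rfl⟩ := hdvd
    rw [Nat.mul_div_cancel_left _ hd, Nat.mul_div_cancel_left _ hk0, mul_assoc,
      Nat.mul_div_cancel_left _ hk0, mul_comm]
  have hle : Subgroup.zpowers ω ≤
      MulAction.stabilizer (ZMod n)ˣ ((n / k : ℕ) : ZMod n) := by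
    rw [Subgroup.zpowers_le, MulAction.mem_stabilizer_iff]
    exact hfix
  have key : ∀ x ∈ unitOrbit n (Subgroup.zpowers ω) r,
      x * ((d / k : ℕ) : ZMod n) = (c : ZMod n) * ((n / k : ℕ) : ZMod n) := by
    rintro _ ⟨a, ha, rfl⟩
    have h := MulAction.mem_stabilizer_iff.mp (hle ha)
    have h' : (a : ZMod n) * ((n / k : ℕ) : ZMod n) = ((n / k : ℕ) : ZMod n) := h
    have hm : ((n / d : ℕ) : ZMod n) * ((d / k : ℕ) : ZMod n) = ((n / k : ℕ) : ZMod n) := by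
      rw [← Nat.cast_mul, hmul]
    change (a : ZMod n) * r * _ = _
    rw [hr, hc]
    calc _ = (ξ : ZMod n) * ((a : ZMod n) * (((n / d : ℕ) : ZMod n) * ((d / k : ℕ) : ZMod n))) := by
          ring
      _ = _ := by rw [hm, h']
  have main : ∀ y : ZMod n,
      superchar n (unitOrbit n (Subgroup.zpowers ω) r) (y + ((d / k : ℕ) : ZMod n))
        = e2 ((c : ℝ) / (k : ℝ)) * superchar n (unitOrbit n (Subgroup.zpowers ω) r) y := by
    intro y
    unfold superchar
    rw [mul_finsum_mem]
    refine finsum_mem_congr rfl fun x hx => ?_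
    have h1 := e2_congr' n hn ((x.val * (y + ((d / k : ℕ) : ZMod n)).val : ℕ) : ℤ)
      (c * (n / k : ℕ) + (x.val * y.val : ℕ)) (by
        simp only [Int.cast_add, Int.cast_mul, Int.cast_natCast, Nat.cast_mul, ZMod.natCast_zmod_val]
        rw [mul_add, key x hx, add_comm])
    have h2 : (((c * (n / k : ℕ) + (x.val * y.val : ℕ) : ℤ) : ℝ) / (n : ℝ))
        = (c : ℝ) / k + ((x.val * y.val : ℕ) : ℝ) / n := by
      have hnr : (n : ℝ) ≠ 0 := by positivity
      have hkr : (k : ℝ) ≠ 0 := by positivity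
      rw [Int.cast_add, Int.cast_mul, Int.cast_natCast, Int.cast_natCast, Nat.cast_div hkn hkr]
      field_simp
    rw [h2, e2_add', Int.cast_natCast] at h1
    exact h1
  refine ⟨main, ?_⟩
  ext z
  constructor
  · rintro ⟨_, ⟨y, rfl⟩, rfl⟩
    exact ⟨_, main y⟩
  · rintro ⟨y, rfl⟩
    refine ⟨_, ⟨y - ((d / k : ℕ) : ZMod n), rfl⟩, ?_⟩
    change _ * _ = _
    rw [← main, sub_add_cancel]
end

section
/- Let p ≡ 1 (mod 4) be prime, let p divide n, let Q_p ⊆ {1, …, p−1} be the set of nonzero quadratic residues modulo p, and let a, b, c be integers coprime to p with Legendre symbols (a|p) = −(c|p). Let X = {((aq+b)·(n/p) + 1) mod n : q ∈ Q_p} ∪ {((cq−b)·(n/p) − 1) mod n : q ∈ Q_p}, and assume these p−1 elements of ℤ/nℤ are distinct. Then for every y ∈ ℤ/nℤ whose integer representative ỹ is NOT divisible by p, one has σ_X(y) = (aỹ|p)·i·√p·sin(2πθ_y) − cos(2πθ_y), where θ_y = (bn+p)ỹ/(pn); in particular, (Re σ_X(y))² + (Im σ_X(y))²/p = 1, i.e.,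 σ_X(y) lies on the ellipse (Re z)² + (Im z)²/p = 1. -/
open Complex

lemma prod_split {M : Type*} [CommMonoid M] (m : ℕ) (f : ℕ → M) :
    ∏ k ∈ Finset.range (2 * m), f (k + 1)
      = ∏ k ∈ Finset.range m, (f (k + 1) * f (2 * m + 1 - (k + 1))) := by
  rw [two_mul, Finset.prod_range_add, Finset.prod_mul_distrib]
  congr 1
  rw [← Finset.prod_range_reflect]
  apply Finset.prod_congr rfl
  intro k hk
  rw [Finset.mem_range] at hk
  congr 1
  omega

lemma half_factorial (p r : ℕ) [Fact p.Prime] (hpr : p = 2 * (2 * r) + 1) :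
    (∏ k ∈ Finset.range (2 * r), ((k : ZMod p) + 1)) ^ 2 = -1 := by
  have h := ZMod.wilsons_lemma p
  have h1 : p - 1 = 2 * (2 * r) := by omega
  rw [h1, ← Finset.prod_range_add_one_eq_factorial] at h
  push_cast at h
  have h2 := prod_split (2 * r) (fun k : ℕ => (k : ZMod p))
  push_cast at h2
  rw [← h, h2, ← Finset.prod_pow]
  have h3 : ∏ k ∈ Finset.range (2 * r), (-1 : ZMod p) = 1 := by simp
  rw [← mul_one (∏ k ∈ Finset.range (2 * r), ((k : ZMod p) + 1) ^ 2)]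
  conv_lhs => arg 2; rw [← h3]
  rw [← Finset.prod_mul_distrib]
  apply Finset.prod_congr rfl
  intro k hk
  rw [Finset.mem_range] at hk
  have h4 : ((2 * (2 * r) + 1 - (k + 1) : ℕ) : ZMod p) = -((k : ZMod p) + 1) := by
    rw [← hpr, Nat.cast_sub (by omega)]
    simp
  have h5 : 2 * (2 * r) + 1 - (k + 1) = 2 * (2 * r) - k := by omega
  rw [h5] at h4
  rw [h4]
  ring

lemma sum_range_zmod (p : ℕ) [NeZero p] {M : Type*} [AddCommMonoid M] (f : ZMod p → M) :
    ∑ j ∈ Finset.range p, f (j : ZMod p) = ∑ x : ZMod p, f x := by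
  refine Finset.sum_bij (fun (j : ℕ) _ => (j : ZMod p)) ?_ ?_ ?_ ?_
  · simp
  · intro a ha b hb h
    rw [Finset.mem_range] at ha hb
    have := congrArg ZMod.val h
    rwa [ZMod.val_cast_of_lt ha, ZMod.val_cast_of_lt hb] at this
  · intro b _
    exact ⟨b.val, by simpa using ZMod.val_lt b, by simp⟩
  · simp

lemma sum_choose (p m : ℕ) [Fact p.Prime] (hm : 0 < m) (hpm : p = 2 * m + 1) :
    (∑ j ∈ Finset.range p, (j : ZMod p) ^ m * (j.choose m : ZMod p)) * (m.factorial : ZMod p) = -1 := by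
  have h0 : ∀ j : ℕ, (j : ZMod p) ^ m * (j.choose m : ZMod p) * (m.factorial : ZMod p)
      = (Polynomial.X ^ m * descPochhammer (ZMod p) m).eval (j : ZMod p) := by
    intro j
    rw [Polynomial.eval_mul, descPochhammer_eval_eq_descFactorial, Nat.descFactorial_eq_factorial_mul_choose]
    simp
    ring
  rw [Finset.sum_mul, Finset.sum_congr rfl (fun j _ => h0 j),
    sum_range_zmod p (fun x => Polynomial.eval x _)]
  set P := Polynomial.X ^ m * descPochhammer (ZMod p) m with hP
  have hmon : P.Monic := (Polynomial.monic_X_pow m).mul (monic_descPochhammer _ m)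
  have hdeg : P.natDegree = 2 * m := by
    rw [hP, Polynomial.Monic.natDegree_mul (Polynomial.monic_X_pow m) (monic_descPochhammer _ m),
      descPochhammer_natDegree, Polynomial.natDegree_X_pow]
    ring
  simp_rw [Polynomial.eval_eq_sum_range, hdeg]
  rw [Finset.sum_comm, Finset.sum_range_succ]
  have h1 : ∑ i ∈ Finset.range (2 * m), ∑ x : ZMod p, P.coeff i * x ^ i = 0 := by
    apply Finset.sum_eq_zero
    intro i hi
    rw [Finset.mem_range] at hi
    rw [← Finset.mul_sum, FiniteField.sum_pow_lt_card_sub_one, mul_zero]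
    rw [ZMod.card]; omega
  rw [h1, zero_add, ← hdeg, hmon.coeff_natDegree, hdeg]
  have h2 : ∀ x : ZMod p, 1 * x ^ (2 * m) = 1 - if x = 0 then 1 else 0 := by
    intro x
    split_ifs with hx
    · simp [hx, hm.ne']
    · have := ZMod.pow_card_sub_one_eq_one hx
      rw [show 2 * m = p - 1 by omega, this]; simp
  rw [Finset.sum_congr rfl (fun x _ => h2 x)]
  simp

open Polynomial in
lemma eps_congr (p r : ℕ) [Fact p.Prime] (hr : 0 < r) (hpr : p = 2 * (2 * r) + 1) (ζ : ℂ)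
    (hζ : IsPrimitiveRoot ζ p) (ε : ℤ)
    (h : ∑ j ∈ Finset.range p, (legendreSym p j : ℂ) * ζ ^ j
      = ε * ∏ k ∈ Finset.range (2 * r), (ζ ^ (k + 1) - ζ ^ (p - (k + 1)))) :
    (ε : ZMod p) * 2 ^ (2 * r) = 1 := by
  have hpp : p.Prime := Fact.out
  set f : ℤ[X] := ∑ j ∈ Finset.range p, C (legendreSym p j) * X ^ j
    - C ε * ∏ k ∈ Finset.range (2 * r), (X ^ (k + 1) - X ^ (p - (k + 1))) with hf
  have hf0 : aeval ζ f = 0 := by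
    simp [hf, h]
  have hd : cyclotomic p ℤ ∣ f := by
    rw [cyclotomic_eq_minpoly hζ hpp.pos]
    exact minpoly.isIntegrallyClosed_dvd (hζ.isIntegral hpp.pos) hf0
  have hd2 : (X - 1 : (ZMod p)[X]) ^ (p - 1) ∣ f.map (Int.castRingHom (ZMod p)) := by
    have := Polynomial.map_dvd (Int.castRingHom (ZMod p)) hd
    rw [map_cyclotomic] at this
    have h2 := cyclotomic_mul_prime_eq_pow_of_not_dvd (ZMod p) (p := p) (n := 1)
      (by simpa using hpp.one_lt.ne')
    rw [one_mul, cyclotomic_one] at h2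
    rwa [h2] at this
  have hc : (taylor 1 (f.map (Int.castRingHom (ZMod p)))).coeff (2 * r) = 0 := by
    obtain ⟨g, hg⟩ := hd2
    rw [hg, taylor_mul, taylor_pow]
    have : taylor 1 (X - 1 : (ZMod p)[X]) = X := by simp
    rw [this, coeff_X_pow_mul', if_neg (by omega)]
  have hprod : ∀ N : ℕ, N ≤ 2 * r → ∃ U : (ZMod p)[X],
      ∏ k ∈ Finset.range N, (X ^ (k + 1) - X ^ (p - (k + 1)) : (ZMod p)[X]) = (X - 1) ^ N * U ∧
      U.eval 1 = ∏ k ∈ Finset.range N, (2 * ((k : ZMod p) + 1)) := by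
    intro N
    induction N with
    | zero => intro _; exact ⟨1, by simp, by simp⟩
    | succ N ih =>
      intro hN
      obtain ⟨U, hU, hU1⟩ := ih (by omega)
      refine ⟨U * ((∑ i ∈ Finset.range (N + 1), X ^ i) - ∑ i ∈ Finset.range (p - (N + 1)), X ^ i), ?_, ?_⟩
      · rw [Finset.prod_range_succ, hU]
        have e1 := mul_geom_sum (X : (ZMod p)[X]) (N + 1)
        have e2 := mul_geom_sum (X : (ZMod p)[X]) (p - (N + 1))
        linear_combination (-(X - 1) ^ N * U) * (e1 - e2)
      · rw [Finset.prod_range_succ, eval_mul, hU1]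
        simp only [eval_sub, eval_finsetSum, eval_pow, eval_X, one_pow, Finset.sum_const, Finset.card_range, nsmul_eq_mul, mul_one]
        rw [Nat.cast_sub (by omega)]
        simp
        left; ring
  obtain ⟨U, hU, hU1⟩ := hprod (2 * r) le_rfl
  have hfm : f.map (Int.castRingHom (ZMod p)) = ∑ j ∈ Finset.range p, C ((j : ZMod p) ^ (2 * r)) * X ^ j
      - C (ε : ZMod p) * ((X - 1) ^ (2 * r) * U) := by
    rw [← hU, hf]
    simp only [Polynomial.map_sub, Polynomial.map_sum, Polynomial.map_mul, Polynomial.map_prod,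
      Polynomial.map_pow, Polynomial.map_C, map_X]
    simp only [Int.coe_castRingHom, legendreSym.eq_pow]
    rw [show p / 2 = 2 * r by omega]
    simp
  rw [hfm, map_sub, map_sum, coeff_sub, finsetSum_coeff] at hc
  simp only [taylor_mul, taylor_C, taylor_pow, taylor_X, coeff_C_mul] at hc
  have hx : taylor 1 (X - 1 : (ZMod p)[X]) = X := by simp
  rw [hx, coeff_X_pow_mul', if_pos le_rfl, Nat.sub_self, taylor_coeff_zero, hU1, Finset.prod_mul_distrib] at hc
  simp only [map_one, coeff_X_add_one_pow, Finset.prod_const, Finset.card_range] at hc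
  have hs := sum_choose p (2 * r) (by omega) hpr
  have hh := half_factorial p r hpr
  rw [← Finset.prod_range_add_one_eq_factorial] at hs
  push_cast at hs
  set F := ∏ k ∈ Finset.range (2 * r), ((k : ZMod p) + 1)
  linear_combination F * hc - hs + (ε : ZMod p) * 2 ^ (2 * r) * hh

noncomputable def chiC (p : ℕ) [Fact p.Prime] : MulChar (ZMod p) ℂ :=
  (quadraticChar (ZMod p)).ringHomComp (Int.castRingHom ℂ)

lemma chiC_apply (p : ℕ) [Fact p.Prime] (k : ℤ) :
    chiC p (k : ZMod p) = (legendreSym p k : ℂ) := by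
  simp [chiC, legendreSym]

lemma prod_sq_eq (p r : ℕ) [Fact p.Prime] (hpr : p = 2 * (2 * r) + 1) (ζ : ℂ)
    (hζ : IsPrimitiveRoot ζ p) :
    (∏ k ∈ Finset.range (2 * r), (ζ ^ (k + 1) - ζ ^ (p - (k + 1)))) ^ 2 = p := by
  have h2 : IsPrimitiveRoot (ζ ^ 2) (2 * (2 * r) + 1) := by
    rw [← hpr]
    apply hζ.pow_of_coprime
    rw [hpr]
    simp
  have h := h2.prod_one_sub_pow_eq_order
  have h3 := prod_split (2 * r) (fun k : ℕ => 1 - (ζ ^ 2) ^ k)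
  rw [h3] at h
  have h4 : (p : ℂ) = ((2 * (2 * r) : ℕ) : ℂ) + 1 := by rw [hpr]; push_cast; ring
  rw [h4, ← h, ← hpr, ← Finset.prod_pow]
  have h5 : ∏ k ∈ Finset.range (2 * r), (-1 : ℂ) = 1 := by simp
  rw [← mul_one (∏ k ∈ Finset.range (2 * r), (ζ ^ (k + 1) - ζ ^ (p - (k + 1))) ^ 2)]
  conv_lhs => arg 2; rw [← h5]
  rw [← Finset.prod_mul_distrib]
  apply Finset.prod_congr rfl
  intro k hk
  rw [Finset.mem_range] at hk
  have h6 : ζ ^ (k + 1) * ζ ^ (p - (k + 1)) = 1 := by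
    rw [← pow_add, show k + 1 + (p - (k + 1)) = p by omega, hζ.pow_eq_one]
  rw [← pow_mul, ← pow_mul, mul_comm 2, mul_comm 2, pow_mul, pow_mul]
  generalize ζ ^ (k + 1) = u at *
  generalize ζ ^ (p - (k + 1)) = v at *
  linear_combination (1 - u * v) * h6

lemma prod_pos_eq (p r : ℕ) [Fact p.Prime] (hpr : p = 2 * (2 * r) + 1) (ζ : ℂ)
    (hζe : ζ = Complex.exp (2 * Real.pi * I / p)) :
    ∃ R : ℝ, 0 < R ∧
    ∏ k ∈ Finset.range (2 * r), (ζ ^ (k + 1) - ζ ^ (p - (k + 1))) = (-1) ^ r * (R : ℂ) := by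
  have hp0 : (p : ℂ) ≠ 0 := by
    have := (Fact.out : p.Prime).ne_zero
    exact_mod_cast this
  have hp0' : (0 : ℝ) < p := by exact_mod_cast (Fact.out : p.Prime).pos
  refine ⟨4 ^ r * ∏ k ∈ Finset.range (2 * r), Real.sin (2 * Real.pi * (k + 1) / p), ?_, ?_⟩
  · apply mul_pos (by positivity)
    apply Finset.prod_pos
    intro k hk
    rw [Finset.mem_range] at hk
    apply Real.sin_pos_of_pos_of_lt_pi
    · have := Real.pi_pos
      positivity
    · rw [div_lt_iff₀ hp0']
      have h1 : (2 * (k + 1) : ℝ) < p := by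
        have : 2 * (k + 1) < p := by omega
        exact_mod_cast this
      nlinarith [Real.pi_pos]
  · have h1 : ∀ k ∈ Finset.range (2 * r), ζ ^ (k + 1) - ζ ^ (p - (k + 1))
        = (2 * I) * ((Real.sin (2 * Real.pi * (k + 1) / p) : ℝ) : ℂ) := by
      intro k hk
      rw [Finset.mem_range] at hk
      have e1 : ζ ^ (k + 1) = Complex.exp (((2 * Real.pi * (k + 1) / p : ℝ) : ℂ) * I) := by
        rw [hζe, ← Complex.exp_nat_mul]
        congr 1
        push_cast
        ring
      have e2 : ζ ^ (p - (k + 1)) = Complex.exp (-((2 * Real.pi * (k + 1) / p : ℝ) : ℂ) * I) := by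
        rw [hζe, ← Complex.exp_nat_mul, Nat.cast_sub (by omega)]
        conv_rhs => rw [← Complex.exp_periodic]
        congr 1
        push_cast
        field_simp
        ring
      rw [e1, e2, Complex.ofReal_sin, Complex.sin]
      ring_nf
      rw [I_sq]
      ring
    rw [Finset.prod_congr rfl h1, Finset.prod_mul_distrib]
    push_cast
    simp only [Finset.prod_const, Finset.card_range]
    rw [pow_mul, mul_pow, I_sq, show (2 ^ 2 * -1 : ℂ) = (-1) * 4 by norm_num, mul_pow]
    ring

lemma gauss_value (p : ℕ) [Fact p.Prime] (hp4 : p % 4 = 1) :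
    gaussSum (chiC p) (ZMod.stdAddChar (N := p)) = (Real.sqrt p : ℂ) := by
  have hpp : p.Prime := Fact.out
  obtain ⟨r, hpr⟩ : ∃ r, p = 2 * (2 * r) + 1 := ⟨p / 4, by omega⟩
  have hr : 0 < r := by
    rcases Nat.eq_zero_or_pos r with h | h
    · subst h; simp at hpr; exact absurd hpr hpp.one_lt.ne'
    · exact h
  have hp2 : p ≠ 2 := by omega
  have hrc : ringChar (ZMod p) ≠ 2 := by rwa [ZMod.ringChar_zmod_n]
  set ζ : ℂ := Complex.exp (2 * Real.pi * I / p) with hζe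
  have hζ : IsPrimitiveRoot ζ p := Complex.isPrimitiveRoot_exp p hpp.ne_zero
  set g := gaussSum (chiC p) (ZMod.stdAddChar (N := p)) with hg
  have hgs : g = ∑ j ∈ Finset.range p, (legendreSym p j : ℂ) * ζ ^ j := by
    rw [hg, gaussSum, ← sum_range_zmod p (fun x => chiC p x * ZMod.stdAddChar x)]
    apply Finset.sum_congr rfl
    intro j _
    have h1 := chiC_apply p j
    have h2 := ZMod.stdAddChar_coe (N := p) j
    push_cast at h1 h2
    rw [h1, h2, hζe, ← Complex.exp_nat_mul]
    congr 2
    ring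
  have hχ1 : chiC p ≠ 1 := by
    intro h
    obtain ⟨a, ha⟩ := quadraticChar_exists_neg_one' hrc
    have : chiC p a = 1 := by rw [h]; simp
    rw [chiC, MulChar.ringHomComp_apply, ha] at this
    norm_num at this
  have hχ2 : (chiC p).IsQuadratic := (quadraticChar_isQuadratic (ZMod p)).comp _
  have hgsq : g ^ 2 = p := by
    rw [hg, gaussSum_sq hχ1 hχ2 (ZMod.isPrimitive_stdAddChar p), ZMod.card]
    have h1 := chiC_apply p (-1)
    push_cast at h1
    rw [h1, legendreSym.at_neg_one hp2, ZMod.χ₄_nat_one_mod_four hp4]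
    simp
  obtain ⟨R, hR, hA⟩ := prod_pos_eq p r hpr ζ hζe
  have hAsq := prod_sq_eq p r hpr ζ hζ
  set A := ∏ k ∈ Finset.range (2 * r), (ζ ^ (k + 1) - ζ ^ (p - (k + 1))) with hAdef
  obtain ⟨ε, hε, hgA⟩ : ∃ ε : ℤ, (ε = 1 ∨ ε = -1) ∧ g = ε * A := by
    have : g ^ 2 = A ^ 2 := by rw [hgsq, hAsq]
    rcases sq_eq_sq_iff_eq_or_eq_neg.mp this with h | h
    · exact ⟨1, Or.inl rfl, by simp [h]⟩
    · exact ⟨-1, Or.inr rfl, by simp [h]⟩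
  have hc := eps_congr p r hr hpr ζ hζ ε (by rw [← hgs, hgA])
  have hl : (((-1 : ℤ) ^ r : ℤ) : ZMod p) = 2 ^ (2 * r) := by
    have h1 := legendreSym.eq_pow p 2
    rw [legendreSym.at_two hp2, ZMod.χ₈_nat_eq_if_mod_eight, show p / 2 = 2 * r by omega] at h1
    push_cast at h1
    rw [← h1]
    rcases Nat.even_or_odd r with he | he
    · rw [he.neg_one_pow]
      obtain ⟨s, hs⟩ := he
      rw [if_neg (by omega), if_pos (by omega)]; simp
    · rw [he.neg_one_pow]
      obtain ⟨s, hs⟩ := he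
      rw [if_neg (by omega), if_neg (by omega)]; simp
  rw [← hl] at hc
  have hεr : ε * (-1) ^ r = 1 := by
    have hne : ((-1 : ℤ) : ZMod p) ≠ 1 := by
      push_cast
      have : Fact (2 < p) := ⟨by omega⟩
      exact ZMod.neg_one_ne_one
    rcases hε with rfl | rfl <;> rcases neg_one_pow_eq_or ℤ r with h | h <;> rw [h] at hc ⊢ <;>
      first
      | (exfalso; apply hne; simpa using hc; done)
      | norm_num
  have hgR : g = R := by
    rw [hgA, hA, ← mul_assoc]
    have : ((ε * (-1) ^ r : ℤ) : ℂ) = 1 := by rw [hεr]; simp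
    push_cast at this
    rw [this, one_mul]
  rw [hgR] at hgsq ⊢
  have : R ^ 2 = p := by exact_mod_cast hgsq
  rw [← this, Real.sqrt_sq hR.le]

/-- Sum over nonzero quadratic residues of an arbitrary function. -/
lemma sum_residues_aux (p : ℕ) [Fact p.Prime] (Q : Finset ℕ)
    (hQ : ∀ q, q ∈ Q ↔ 0 < q ∧ q < p ∧ ∃ t : ZMod p, t ^ 2 = (q : ZMod p)) (F : ZMod p → ℂ) :
    ∑ q ∈ Q, F (q : ZMod p)
      = (1 / 2 : ℂ) * (∑ x, F x + ∑ x, chiC p x * F x - F 0) := by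
  have hpp : p.Prime := Fact.out
  have h1 : ∑ q ∈ Q, F (q : ZMod p)
      = ∑ j ∈ Finset.range p, (1 / 2 : ℂ) *
          ((1 + chiC p (j : ZMod p) - if (j : ZMod p) = 0 then 1 else 0) * F (j : ZMod p)) := by
    have hsub : Q ⊆ Finset.range p := by
      intro q hq
      rw [Finset.mem_range]
      exact ((hQ q).1 hq).2.1
    rw [← Finset.sum_subset hsub]
    · apply Finset.sum_congr rfl
      intro q hq
      obtain ⟨h0, hlt, t, ht⟩ := (hQ q).1 hq
      have hq0 : (q : ZMod p) ≠ 0 := by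
        rw [Ne, ZMod.natCast_eq_zero_iff]
        exact Nat.not_dvd_of_pos_of_lt h0 hlt
      have : chiC p (q : ZMod p) = 1 := by
        rw [chiC, MulChar.ringHomComp_apply,
          (quadraticChar_one_iff_isSquare hq0).2 ⟨t, by rw [← ht, sq]⟩]
        simp
      rw [this, if_neg hq0]
      ring
    · intro j hj hjQ
      rw [Finset.mem_range] at hj
      by_cases h0 : (j : ZMod p) = 0
      · rw [if_pos h0, h0, MulChar.map_zero]; simp
      · have hns : ¬ IsSquare (j : ZMod p) := by
          rintro ⟨t, ht⟩
          apply hjQ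
          rw [hQ]
          refine ⟨?_, hj, t, by rw [ht, sq]⟩
          rcases Nat.eq_zero_or_pos j with h | h
          · simp [h] at h0
          · exact h
        have : chiC p (j : ZMod p) = -1 := by
          rw [chiC, MulChar.ringHomComp_apply,
            quadraticChar_neg_one_iff_not_isSquare.2 hns]
          simp
        rw [this, if_neg h0]
        simp
  rw [h1, sum_range_zmod p (fun x => (1 / 2 : ℂ) * ((1 + chiC p x - if x = 0 then 1 else 0) * F x)),
    ← Finset.mul_sum]
  congr 1
  have : F 0 = ∑ x : ZMod p, if x = 0 then F x else 0 := by
    simp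
  rw [this]
  rw [← Finset.sum_add_distrib, ← Finset.sum_sub_distrib]
  apply Finset.sum_congr rfl
  intro x _
  split_ifs <;> ring

lemma card_residues (p : ℕ) [Fact p.Prime] (hp2 : p ≠ 2) (Q : Finset ℕ)
    (hQ : ∀ q, q ∈ Q ↔ 0 < q ∧ q < p ∧ ∃ t : ZMod p, t ^ 2 = (q : ZMod p)) :
    Q.card + Q.card = p - 1 := by
  have hpp : p.Prime := Fact.out
  have h := sum_residues_aux p Q hQ (fun _ => 1)
  have hrc : ringChar (ZMod p) ≠ 2 := by rwa [ZMod.ringChar_zmod_n]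
  have h2 : ∑ x : ZMod p, chiC p x = 0 := by
    have := congrArg (Int.cast : ℤ → ℂ) (quadraticChar_sum_zero hrc)
    push_cast at this
    simpa [chiC] using this
  simp only [mul_one, h2] at h
  simp at h
  have h3 : ((Q.card + Q.card + 1 : ℕ) : ℂ) = p := by
    push_cast
    rw [h]
    ring
  have h4 : Q.card + Q.card + 1 = p := by exact_mod_cast h3
  omega

/-- Sum over nonzero quadratic residues. -/
lemma sum_residues (p : ℕ) [Fact p.Prime] (hp4 : p % 4 = 1) (Q : Finset ℕ)
    (hQ : ∀ q, q ∈ Q ↔ 0 < q ∧ q < p ∧ ∃ t : ZMod p, t ^ 2 = (q : ZMod p)) (k : ℤ)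
    (hk : ¬ (p : ℤ) ∣ k) :
    ∑ q ∈ Q, ZMod.stdAddChar (((k * q : ℤ)) : ZMod p)
      = ((legendreSym p k : ℂ) * (Real.sqrt p : ℂ) - 1) / 2 := by
  have hpp : p.Prime := Fact.out
  have hk0 : (k : ZMod p) ≠ 0 := by rwa [Ne, ZMod.intCast_zmod_eq_zero_iff_dvd]
  have h1 : ∑ q ∈ Q, ZMod.stdAddChar (((k * q : ℤ)) : ZMod p)
      = ∑ q ∈ Q, ZMod.stdAddChar ((q : ZMod p) * (k : ZMod p)) := by
    apply Finset.sum_congr rfl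
    intro q _
    push_cast
    rw [mul_comm]
  rw [h1, sum_residues_aux p Q hQ (fun x => ZMod.stdAddChar (x * (k : ZMod p)))]
  have h3 := AddChar.sum_mulShift (k : ZMod p) (ZMod.isPrimitive_stdAddChar p)
  rw [if_neg hk0] at h3
  have h4 := gaussSum_mulShift (chiC p) (ZMod.stdAddChar (N := p)) (Units.mk0 _ hk0)
  rw [gauss_value p hp4] at h4
  have h5 : gaussSum (chiC p) (AddChar.mulShift (ZMod.stdAddChar (N := p)) ((Units.mk0 _ hk0 : (ZMod p)ˣ) : ZMod p))
      = ∑ x : ZMod p, chiC p x * ZMod.stdAddChar (x * (k : ZMod p)) := by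
    rw [gaussSum]
    simp [AddChar.mulShift_apply, mul_comm]
  rw [h5, Units.val_mk0, chiC_apply] at h4
  have h6 : (legendreSym p k : ℂ) ^ 2 = 1 := by exact_mod_cast legendreSym.sq_one p hk0
  rw [h3, ← h4, zero_mul, AddChar.map_zero_eq_one]
  push_cast
  linear_combination (-(1 / 2 : ℂ) * ∑ x : ZMod p, chiC p x * ZMod.stdAddChar (x * (k : ZMod p))) * h6

lemma e2_term (n p : ℕ) [NeZero n] [NeZero p] (hpn : p ∣ n) (u s : ℤ) (y : ZMod n) :
    e2 (((((u : ZMod n) * ((n / p : ℕ) : ZMod n) + (s : ZMod n)).val * y.val : ℕ) : ℝ) / (n : ℝ))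
      = Complex.exp (2 * Real.pi * I * (u * y.val / p + s * y.val / n)) := by
  have h4 : ((n / p : ℕ) : ℂ) = (n : ℂ) / p :=
    Nat.cast_div hpn (by exact_mod_cast NeZero.ne p)
  generalize n / p = d at h4 ⊢
  set x : ZMod n := (u : ZMod n) * (d : ZMod n) + (s : ZMod n) with hx
  have hn0 : (n : ℂ) ≠ 0 := by exact_mod_cast NeZero.ne n
  have hp0 : (p : ℂ) ≠ 0 := by exact_mod_cast NeZero.ne p
  have h1 := ZMod.stdAddChar_coe (N := n) ((x.val * y.val : ℕ) : ℤ)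
  have h2 := ZMod.stdAddChar_coe (N := n) ((u * (d : ℤ) + s) * y.val)
  have h3 : ((((x.val * y.val : ℕ) : ℤ)) : ZMod n) = (((u * (d : ℤ) + s) * y.val : ℤ) : ZMod n) := by
    push_cast
    rw [ZMod.natCast_zmod_val, ZMod.natCast_zmod_val, hx]
  rw [h3, h2] at h1
  rw [e2]
  have h5 : (2 * Real.pi * I * (((((x.val * y.val : ℕ) : ℝ) / (n : ℝ)) : ℝ) : ℂ) : ℂ)
      = 2 * Real.pi * I * (((x.val * y.val : ℕ) : ℤ) : ℂ) / n := by
    push_cast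
    ring
  rw [h5, ← h1]
  congr 1
  push_cast
  rw [h4]
  field_simp


theorem stmt13 (n p : ℕ) [hp : Fact p.Prime] (hp4 : p % 4 = 1) (hpn : p ∣ n)
    (Qp : Set ℕ) (hQp : Qp = {q : ℕ | 0 < q ∧ q < p ∧ ∃ t : ZMod p, t ^ 2 = (q : ZMod p)})
    (a b c : ℤ) (hap : ¬ (p : ℤ) ∣ a) (hbp : ¬ (p : ℤ) ∣ b) (hcp : ¬ (p : ℤ) ∣ c)
    (hleg : legendreSym p a = - legendreSym p c)
    (X : Set (ZMod n))
    (hX : X = (fun q : ℕ => ((a * q + b : ℤ) : ZMod n) * ((n / p : ℕ) : ZMod n) + 1) '' Qp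
        ∪ (fun q : ℕ => ((c * q - b : ℤ) : ZMod n) * ((n / p : ℕ) : ZMod n) - 1) '' Qp)
    (hdist : X.ncard = p - 1)
    (y : ZMod n) (hy : ¬ p ∣ y.val) :
    superchar n X y
      = (legendreSym p (a * y.val) : ℂ) * Complex.I * (Real.sqrt p : ℂ) *
          ((Real.sin (2 * Real.pi * (((b * n + p : ℤ) : ℝ) * (y.val : ℝ) / ((p : ℝ) * n))) : ℝ) : ℂ)
        - ((Real.cos (2 * Real.pi * (((b * n + p : ℤ) : ℝ) * (y.val : ℝ) / ((p : ℝ) * n))) : ℝ) : ℂ)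
    ∧ (superchar n X y).re ^ 2 + (superchar n X y).im ^ 2 / p = 1 := by
  classical
  have hpp : p.Prime := hp.out
  have hp2 : p ≠ 2 := by omega
  have hp5 : 5 ≤ p := by have := hpp.two_le; omega
  set Q : Finset ℕ := (Finset.range p).filter
    (fun q => 0 < q ∧ ∃ t : ZMod p, t ^ 2 = (q : ZMod p)) with hQdef
  have hQ : ∀ q, q ∈ Q ↔ 0 < q ∧ q < p ∧ ∃ t : ZMod p, t ^ 2 = (q : ZMod p) := by
    intro q
    rw [hQdef, Finset.mem_filter, Finset.mem_range]
    tauto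
  have hQp' : Qp = (Q : Set ℕ) := by
    rw [hQp]
    ext q
    simp only [Set.mem_ofPred_eq, Finset.mem_coe, hQ]
  set f : ℕ → ZMod n := fun q => ((a * q + b : ℤ) : ZMod n) * ((n / p : ℕ) : ZMod n) + 1 with hf
  set g : ℕ → ZMod n := fun q => ((c * q - b : ℤ) : ZMod n) * ((n / p : ℕ) : ZMod n) - 1 with hg
  set h : ℕ ⊕ ℕ → ZMod n := Sum.elim f g with hh
  have hXf : X = (((Q.disjSum Q).image h : Finset (ZMod n)) : Set (ZMod n)) := by
    rw [hX, hQp']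
    ext x
    simp [hh, Finset.mem_disjSum, Finset.mem_image]
  have hcard := card_residues p hp2 Q hQ
  have hinj : Set.InjOn h (Q.disjSum Q : Finset (ℕ ⊕ ℕ)) := by
    rw [← Finset.card_image_iff, Finset.card_disjSum, hcard, ← hdist, hXf, Set.ncard_coe_finset]
  have hn : n ≠ 0 := by
    rintro rfl
    have h1 : X ⊆ ({1, -1} : Set (ZMod 0)) := by
      rw [hX]
      rintro x (⟨q, _, rfl⟩ | ⟨q, _, rfl⟩) <;> simp [hf, hg]
    have h2 := Set.ncard_le_ncard h1 (by simp)
    have h3 := Set.ncard_insert_le (1 : ZMod 0) {-1}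
    rw [Set.ncard_singleton] at h3
    omega
  have : NeZero n := ⟨hn⟩
  have : NeZero p := ⟨hpp.ne_zero⟩
  have hn0 : (n : ℂ) ≠ 0 := by exact_mod_cast hn
  have hp0 : (p : ℂ) ≠ 0 := by exact_mod_cast hpp.ne_zero
  have hyp : ¬ (p : ℤ) ∣ (y.val : ℤ) := by rwa [Int.natCast_dvd_natCast]
  have hpint : Prime (p : ℤ) := Nat.prime_iff_prime_int.mp hpp
  have hay : ¬ (p : ℤ) ∣ a * y.val := fun hd => (hpint.dvd_or_dvd hd).elim hap hyp
  have hcy : ¬ (p : ℤ) ∣ c * y.val := fun hd => (hpint.dvd_or_dvd hd).elim hcp hyp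
  set θ : ℝ := 2 * Real.pi * (((b * n + p : ℤ) : ℝ) * (y.val : ℝ) / ((p : ℝ) * n)) with hθ
  have hfterm : ∀ q : ℕ, e2 ((((f q).val * y.val : ℕ) : ℝ) / (n : ℝ))
      = Complex.exp (θ * I) * ZMod.stdAddChar (((a * y.val * q : ℤ)) : ZMod p) := by
    intro q
    have h1 := e2_term n p hpn (a * q + b) 1 y
    rw [Int.cast_one (R := ZMod n)] at h1
    rw [hf, h1, ZMod.stdAddChar_coe, ← Complex.exp_add, hθ]
    congr 1
    push_cast
    field_simp
    ring
  have hgterm : ∀ q : ℕ, e2 ((((g q).val * y.val : ℕ) : ℝ) / (n : ℝ))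
      = Complex.exp (-θ * I) * ZMod.stdAddChar (((c * y.val * q : ℤ)) : ZMod p) := by
    intro q
    have h1 := e2_term n p hpn (c * q - b) (-1) y
    rw [Int.cast_neg (R := ZMod n), Int.cast_one (R := ZMod n), ← sub_eq_add_neg] at h1
    rw [hg, h1, ZMod.stdAddChar_coe, ← Complex.exp_add, hθ]
    congr 1
    push_cast
    field_simp
    ring
  have hlc : legendreSym p (c * y.val) = - legendreSym p (a * y.val) := by
    rw [legendreSym.mul, legendreSym.mul, hleg]
    ring
  have hmain : superchar n X y
      = (legendreSym p (a * y.val) : ℂ) * Complex.I * (Real.sqrt p : ℂ) * ((Real.sin θ : ℝ) : ℂ)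
        - ((Real.cos θ : ℝ) : ℂ) := by
    rw [superchar, hXf, finsum_mem_coe_finset, Finset.sum_image hinj, Finset.sum_disjSum]
    simp only [hh, Sum.elim_inl, Sum.elim_inr, hfterm, hgterm]
    rw [← Finset.mul_sum, ← Finset.mul_sum, sum_residues p hp4 Q hQ _ hay,
      sum_residues p hp4 Q hQ _ hcy, hlc, Complex.ofReal_sin, Complex.ofReal_cos,
      Complex.sin, Complex.cos]
    push_cast
    linear_combination (-(legendreSym p (a * y.val) : ℂ) * (Real.sqrt p : ℂ) *
      (Complex.exp (-θ * I) - Complex.exp (θ * I)) / 2) * Complex.I_sq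
  refine ⟨hmain, ?_⟩
  have hay0 : ((a * y.val : ℤ) : ZMod p) ≠ 0 := by
    rwa [Ne, ZMod.intCast_zmod_eq_zero_iff_dvd]
  have hl2 : ((legendreSym p (a * y.val) : ℝ)) ^ 2 = 1 := by
    exact_mod_cast legendreSym.sq_one p hay0
  have hform : superchar n X y = ((-Real.cos θ : ℝ) : ℂ)
      + (((legendreSym p (a * y.val) : ℝ) * Real.sqrt p * Real.sin θ : ℝ) : ℂ) * I := by
    rw [hmain]
    push_cast
    ring
  have hre : (superchar n X y).re = -Real.cos θ := by
    rw [hform, Complex.add_re, Complex.ofReal_re, Complex.re_ofReal_mul, Complex.I_re]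
    ring
  have him : (superchar n X y).im = (legendreSym p (a * y.val) : ℝ) * Real.sqrt p * Real.sin θ := by
    rw [hform, Complex.add_im, Complex.ofReal_im, Complex.im_ofReal_mul, Complex.I_im]
    ring
  have hpr0 : (p : ℝ) ≠ 0 := by exact_mod_cast hpp.ne_zero
  rw [hre, him, mul_pow, mul_pow, hl2, Real.sq_sqrt (Nat.cast_nonneg p), one_mul,
    mul_div_cancel_left₀ _ hpr0, neg_sq]
  exact Real.cos_sq_add_sin_sq θ
end

section
/- Let q = p^a be a power of an odd prime p, let d be a positive divisor of p−1, let ω be an element of multiplicative order d in (ℤ/qℤ)^×, let A = ⟨ω⟩, and let X = A·1. For 0 ≤ k ≤ d−1 and 0 ≤ j ≤ φ(d)−1, let b_{k,j} ∈ ℤ be the coefficients of the remainder of t^k upon division by the d-th cyclotomic polynomial Φ_d(t) in ℤ[t], i.e., t^k ≡ Σ_{j=0}^{φ(d)−1} b_{k,j} t^j (mod Φ_d(t)). Then for every y ∈ ℤ/qℤ there exist complex numbers z_1, …, z_{φ(d)} of modulus 1 such that σ_X(y) = Σ_{k=0}^{d−1} ∏_{j=0}^{φ(d)−1} z_{j+1}^{b_{k,j}}.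 That is, the image of σ_X is contained in the image of the function g : 𝕋^{φ(d)} → ℂ, g(z_1,…,z_{φ(d)}) = Σ_{k=0}^{d−1} ∏_{j=0}^{φ(d)−1} z_{j+1}^{b_{k,j}}, where 𝕋 is the unit circle. -/
open Complex

theorem isUnit_or_nilp (p e : ℕ) (hp : p.Prime) (x : ZMod (p ^ e)) :
    IsUnit x ∨ IsNilpotent x := by
  have : NeZero (p ^ e) := ⟨pow_ne_zero _ hp.ne_zero⟩
  by_cases h : p ∣ x.val
  · right
    refine ⟨e, ?_⟩
    rw [← ZMod.natCast_zmod_val x, ← Nat.cast_pow, ZMod.natCast_eq_zero_iff]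
    exact pow_dvd_pow_of_dvd h e
  · left
    rw [← ZMod.natCast_zmod_val x, ZMod.isUnit_iff_coprime]
    exact Nat.Coprime.pow_right _ ((hp.coprime_iff_not_dvd.2 h).symm)

theorem eq_one_of_nilp {R : Type*} [CommRing R] (d : ℕ) (hd : IsUnit (d : R)) (u : R)
    (hu : u ^ d = 1) (hn : IsNilpotent (u - 1)) : u = 1 := by
  have h1 : (∑ i ∈ Finset.range d, u ^ i) * (u - 1) = 0 := by
    rw [geom_sum_mul, hu, sub_self]
  have h2 : u - 1 ∣ (∑ i ∈ Finset.range d, u ^ i) - d := by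
    have : (∑ i ∈ Finset.range d, u ^ i) - (d : R) = ∑ i ∈ Finset.range d, (u ^ i - 1) := by
      simp [Finset.sum_sub_distrib]
    rw [this]
    exact Finset.dvd_sum fun i _ => sub_one_dvd_pow_sub_one u i
  have h3 : IsNilpotent ((∑ i ∈ Finset.range d, u ^ i) - (d : R)) := by
    obtain ⟨c, hc⟩ := h2
    rw [hc]
    exact (Commute.all _ _).isNilpotent_mul_right hn
  have h4 : IsUnit (∑ i ∈ Finset.range d, u ^ i) := by
    have := h3.isUnit_add_left_of_commute hd (Commute.all _ _)
    simpa using this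
  exact sub_eq_zero.1 (h4.mul_right_eq_zero.1 h1)

open Polynomial in
theorem cyc_eval (p e d : ℕ) (hp : p.Prime) (hd : 0 < d) (hdvd : d ∣ p - 1)
    (ω : (ZMod (p ^ e))ˣ) (hω : orderOf ω = d) :
    aeval (ω : ZMod (p ^ e)) (cyclotomic d ℤ) = 0 := by
  have hdu : IsUnit (d : ZMod (p ^ e)) := by
    rw [ZMod.isUnit_iff_coprime]
    apply Nat.Coprime.pow_right
    apply Nat.Coprime.symm
    rw [hp.coprime_iff_not_dvd]
    intro h
    have := Nat.le_of_dvd (by have := hp.two_le; omega) (h.trans hdvd)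
    have := hp.two_le
    omega
  have hpow : (ω : ZMod (p ^ e)) ^ d = 1 := by
    rw [← Units.val_pow_eq_pow_val, ← hω, pow_orderOf_eq_one, Units.val_one]
  have key : ∀ c ∈ d.properDivisors, IsUnit (aeval (ω : ZMod (p ^ e)) (cyclotomic c ℤ)) := by
    intro c hc
    rw [Nat.mem_properDivisors] at hc
    have h1 : IsUnit ((ω : ZMod (p ^ e)) ^ c - 1) := by
      refine (isUnit_or_nilp p e hp _).resolve_right fun hn => ?_
      have h := eq_one_of_nilp d hdu ((ω : ZMod (p ^ e)) ^ c)
        (by rw [← pow_mul, mul_comm, pow_mul, hpow, one_pow]) hn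
      have h' : ω ^ c = 1 := by
        ext
        simpa using h
      have := orderOf_dvd_of_pow_eq_one h'
      rw [hω] at this
      exact absurd (Nat.le_of_dvd (Nat.pos_of_dvd_of_pos hc.1 hd) this) (by omega)
    refine isUnit_of_dvd_unit ?_ h1
    have := map_dvd (aeval (ω : ZMod (p ^ e))) (cyclotomic.dvd_X_pow_sub_one c ℤ)
    simpa using this
  have hprod := congrArg (aeval (ω : ZMod (p ^ e))) (prod_cyclotomic_eq_X_pow_sub_one hd ℤ)
  rw [← Nat.cons_self_properDivisors hd.ne', Finset.prod_cons, map_mul, map_prod] at hprod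
  simp only [map_sub, map_pow, aeval_X, map_one, hpow, sub_self] at hprod
  have hu : IsUnit (∏ c ∈ d.properDivisors, aeval (ω : ZMod (p ^ e)) (cyclotomic c ℤ)) :=
    Finset.prod_induction _ IsUnit (fun _ _ => IsUnit.mul) isUnit_one key
  exact hu.mul_left_eq_zero.1 hprod

theorem addChar_sum {ι A M : Type*} [AddCommMonoid A] [CommMonoid M] (ψ : AddChar A M)
    (s : Finset ι) (f : ι → A) : ψ (∑ i ∈ s, f i) = ∏ i ∈ s, ψ (f i) := by
  classical
  induction s using Finset.induction_on with
  | empty => simp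
  | insert a s ha ih =>
    rw [Finset.sum_insert ha, Finset.prod_insert ha, AddChar.map_add_eq_mul, ih]

open Polynomial in
theorem stmt17 (p e d : ℕ) (hp : p.Prime) (hodd : Odd p) (he : 0 < e)
    (hd : 0 < d) (hdvd : d ∣ p - 1)
    (ω : (ZMod (p ^ e))ˣ) (hω : orderOf ω = d)
    (b : Fin d → Fin (Nat.totient d) → ℤ)
    (hb : ∀ k : Fin d, (X : ℤ[X]) ^ (k : ℕ) %ₘ Polynomial.cyclotomic d ℤ
        = ∑ j : Fin (Nat.totient d), Polynomial.C (b k j) * (X : ℤ[X]) ^ (j : ℕ))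
    (y : ZMod (p ^ e)) :
    ∃ z : Fin (Nat.totient d) → ℂ, (∀ j, ‖z j‖ = 1) ∧
      superchar (p ^ e) (unitOrbit (p ^ e) (Subgroup.zpowers ω) 1) y
        = ∑ k : Fin d, ∏ j : Fin (Nat.totient d), z j ^ (b k j) := by
  have : NeZero (p ^ e) := ⟨pow_ne_zero _ hp.ne_zero⟩
  have hcyc := cyc_eval p e d hp hd hdvd ω hω
  have hk : ∀ k : Fin d, (ω : ZMod (p ^ e)) ^ (k : ℕ)
      = ∑ j : Fin (Nat.totient d), b k j • (ω : ZMod (p ^ e)) ^ (j : ℕ) := by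
    intro k
    have h := congrArg (aeval (ω : ZMod (p ^ e)))
      (modByMonic_add_div ((X : ℤ[X]) ^ (k : ℕ)) (cyclotomic d ℤ))
    rw [map_add, map_mul, hcyc, zero_mul, add_zero, hb] at h
    simpa using h.symm
  refine ⟨fun j => ZMod.stdAddChar ((ω : ZMod (p ^ e)) ^ (j : ℕ) * y),
    fun j => AddChar.norm_apply _ _, ?_⟩
  have hset : unitOrbit (p ^ e) (Subgroup.zpowers ω) 1
      = Set.range (fun k : Fin d => (ω : ZMod (p ^ e)) ^ (k : ℕ)) := by
    ext x
    simp only [unitOrbit, mul_one, Set.mem_image, SetLike.mem_coe, Set.mem_range]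
    constructor
    · rintro ⟨a, ha, rfl⟩
      rw [mem_zpowers_iff_mem_range_orderOf, Finset.mem_image] at ha
      obtain ⟨k, hk, rfl⟩ := ha
      rw [Finset.mem_range, hω] at hk
      exact ⟨⟨k, hk⟩, by simp⟩
    · rintro ⟨k, rfl⟩
      exact ⟨ω ^ (k : ℕ), Subgroup.npow_mem_zpowers ω k, by simp⟩
  have hinj : Function.Injective (fun k : Fin d => (ω : ZMod (p ^ e)) ^ (k : ℕ)) := by
    intro k l h
    have h' : ω ^ (k : ℕ) = ω ^ (l : ℕ) := by
      ext
      simpa using h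
    exact Fin.ext (pow_injOn_Iio_orderOf (by simp [hω]) (by simp [hω]) h')
  rw [superchar, hset, finsum_mem_range hinj, finsum_eq_sum_of_fintype]
  refine Finset.sum_congr rfl fun k _ => ?_
  rw [e2_eq, hk k, Finset.sum_mul]
  rw [addChar_sum]
  refine Finset.prod_congr rfl fun j _ => ?_
  rw [smul_mul_assoc, AddChar.map_zsmul_eq_zpow]
end
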